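/- arXiv:2003.13207 — 2 statements merged into one kernel-verified Lean document; each statement's English description precedes it below -/
import Mathlib

section
/- For all ordinals α < ε₀ and natural numbers n ≤ m: if α <_n β then α <_m β. (Monotonicity of the step-down relation in the base.) -/
open ONote in
/-- `α` is a successor ordinal notation (its Cantor normal form ends with `ω^0·m`). -/
def ONote.isSucc : ONote → Prop
  | ONote.zero => False
  | ONote.oadd e _ ONote.zero => e = 0
  | ONote.oadd _ _ (ONote.oadd e n a) => ONote.isSucc (ONote.oadd e n a)

instance : DecidablePred ONote.isSucc := by
  intro a
  induction a with
  | zero => exact .isFalse (by simp [ONote.isSucc])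
  | oadd e n a ihe iha =>
    cases a with
    | zero => exact decidable_of_iff (e = 0) Iff.rfl
    | oadd e' n' a' => exact iha

/-- The standard fundamental sequence assignment `α[x]` on Cantor normal forms:
`0[x] = 0`, `(α+1)[x] = α`, and for `λ` with last term `ω^(β+1)` one has
`λ[x] = (λ - ω^(β+1)) + ω^β·x`, while for last term `ω^γ` (`γ` limit),
`λ[x] = (λ - ω^γ) + ω^(γ[x])`. -/
def ONote.fseq : ONote → ℕ → ONote
  | ONote.zero, _ => ONote.zero
  | ONote.oadd e m (ONote.oadd e' m' a'), x =>
      ONote.oadd e m (ONote.fseq (ONote.oadd e' m' a') x)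
  | ONote.oadd ONote.zero m ONote.zero, _ =>
      if _h : m = 1 then ONote.zero else ONote.oadd ONote.zero (m - 1) ONote.zero
  | ONote.oadd (ONote.oadd e1 m1 a1) m ONote.zero, x =>
      let e := ONote.oadd e1 m1 a1
      let tail : ONote → ONote :=
        fun t => if m = 1 then t else ONote.oadd e (m - 1) t
      if ONote.isSucc e then
        match x with
        | 0 => tail ONote.zero
        | Nat.succ y => tail (ONote.oadd (ONote.fseq e (y+1)) (Nat.succPNat y) ONote.zero)
      else tail (ONote.oadd (ONote.fseq e x) 1 ONote.zero)

/-- `α <_n β` : transitive closure of `α = β[n]`. -/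
def ONote.stepLt (n : ℕ) (a b : ONote) : Prop :=
  Relation.TransGen (fun x y => x = ONote.fseq y n) a b

/-- `α ≤_n β`. -/
def ONote.stepLe (n : ℕ) (a b : ONote) : Prop :=
  ONote.stepLt n a b ∨ a = b

/-- The graph of the Hardy hierarchy: `H_0(x) = x`, `H_{α+1}(x) = H_α(x+1)`,
`H_λ(x) = H_{λ[x]}(x)` for limit `λ`. -/
inductive HardyRel : ONote → ℕ → ℕ → Prop
  | zero (x : ℕ) : HardyRel ONote.zero x x
  | succ {a : ONote} {x y : ℕ} (h : a.isSucc) (hrec : HardyRel (a.fseq x) (x + 1) y) :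
      HardyRel a x y
  | limit {a : ONote} {x y : ℕ} (h0 : a ≠ ONote.zero) (h : ¬ a.isSucc)
      (hrec : HardyRel (a.fseq x) x y) : HardyRel a x y

open scoped Classical in
/-- The Hardy function `H_α : ℕ → ℕ` (for `α` in normal form the defining
recursion terminates, so `hardy` is the unique value of the graph `HardyRel`). -/
noncomputable def hardy (a : ONote) (x : ℕ) : ℕ :=
  if h : ∃ y, HardyRel a x y then h.choose else 0

/-!
Every `n`-step `b ↦ b[n]` is a composite of `m`-steps: `b[n] ≤_m b[m] <_m b` when `n ≤ m`. The
inequality `b[n] ≤_m b[m]` (the Bachmann property) goes by induction on the notation `b`. Descents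
lift through the addition of leading terms, which reduces it to `b = ω ^ e`. If `e` is a successor,
it compares two multiples of the same power of `ω`, and the larger descends to the smaller because
every notation descends to `0`. If `e` is a limit, the descent from `e[m]` to `e[n]` lifts through
`ω ^ ·`, as every descent with a positive base does.
-/

section StepDown

open ONote Relation

/-- The power `ω ^ e` as a notation. It is an abbreviation so that it is interchangeable with the
multiple `ω ^ e * k = oadd e k 0` at `k = 1`. -/
abbrev omegaPow (e : ONote) : ONote := oadd e 1 0

variable {n m : ℕ} {a b c e : ONote}

theorem fseq_oadd_of_ne_zero (e : ONote) (k : ℕ+) (hb : b ≠ 0) (n : ℕ) :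
    fseq (oadd e k b) n = oadd e k (fseq b n) := by
  cases b with
  | zero => exact absurd rfl hb
  | oadd => simp only [fseq]

theorem fseq_oadd_add_one (e : ONote) (k : ℕ+) (n : ℕ) :
    fseq (oadd e (k + 1) 0) n = oadd e k (fseq (omegaPow e) n) := by
  have hk : k + 1 ≠ 1 := (PNat.lt_add_left 1 k).ne'
  have hk' : k + 1 - 1 = k := PNat.add_sub
  cases e with
  | zero => simp [fseq, hk, hk']
  | oadd => cases n <;> simp only [fseq, hk, hk'] <;> split_ifs <;> simp_all

theorem fseq_omegaPow_zero (n : ℕ) : fseq (omegaPow 0) n = 0 := by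
  simp [← zero_def, fseq]

theorem fseq_omegaPow_of_isSucc_zero (he : e.isSucc) : fseq (omegaPow e) 0 = 0 := by
  cases e with
  | zero => exact he.elim
  | oadd => simp [← zero_def, fseq, he]

theorem fseq_omegaPow_of_isSucc_add_one (he : e.isSucc) (n : ℕ) :
    fseq (omegaPow e) (n + 1) = oadd (fseq e (n + 1)) n.succPNat 0 := by
  cases e with
  | zero => exact he.elim
  | oadd => simp [← zero_def, fseq, he]

theorem fseq_omegaPow_of_not_isSucc (he₀ : e ≠ 0) (he : ¬ e.isSucc) (n : ℕ) :
    fseq (omegaPow e) n = omegaPow (fseq e n) := by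
  cases e with
  | zero => exact absurd rfl he₀
  | oadd => simp [← zero_def, fseq, he]

theorem fseq_eq_of_isSucc (ha : a.isSucc) (n m : ℕ) : fseq a n = fseq a m := by
  induction a with
  | zero => exact ha.elim
  | oadd e k b _ ih =>
    cases b with
    | zero =>
      obtain rfl : e = zero := ha
      simp only [fseq]
    | oadd => simp only [fseq, ih ha]

theorem stepLe_iff_reflTransGen :
    stepLe n a b ↔ ReflTransGen (fun x y => x = fseq y n) a b := by
  rw [reflTransGen_iff_eq_or_transGen, or_comm, eq_comm]
  rfl

theorem stepLe_refl (n : ℕ) (a : ONote) : stepLe n a a :=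
  .inr rfl

theorem stepLe_trans (hab : stepLe n a b) (hbc : stepLe n b c) : stepLe n a c := by
  rw [stepLe_iff_reflTransGen] at *
  exact hab.trans hbc

theorem stepLt_of_stepLe_fseq (h : stepLe n a (fseq b n)) : stepLt n a b :=
  .tail' (stepLe_iff_reflTransGen.1 h) rfl

theorem stepLe_of_stepLe_fseq (h : stepLe n a (fseq b n)) : stepLe n a b :=
  .inl (stepLt_of_stepLe_fseq h)

-- Since `0[n] = 0`, the steps from `0` are loops, and an induction may skip them.
@[elab_as_elim]
theorem stepLe_induction {motive : (b : ONote) → stepLe n a b → Prop}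
    (refl : motive a (stepLe_refl n a))
    (step : ∀ c (_ : c ≠ 0) (h : stepLe n a (fseq c n)), motive (fseq c n) h →
      motive c (stepLe_of_stepLe_fseq h))
    (h : stepLe n a b) : motive b h := by
  induction stepLe_iff_reflTransGen.1 h with
  | refl => exact refl
  | @tail _ c hab hc ih =>
    subst hc
    have hab := stepLe_iff_reflTransGen.2 hab
    rcases eq_or_ne c 0 with rfl | hc₀
    · exact ih hab
    · exact step c hc₀ hab (ih hab)

theorem oadd_stepLe_oadd (e : ONote) (k : ℕ+) (h : stepLe n a b) :
    stepLe n (oadd e k a) (oadd e k b) := by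
  induction h using stepLe_induction with
  | refl => exact stepLe_refl n _
  | step c hc _ ih =>
    apply stepLe_of_stepLe_fseq
    rwa [fseq_oadd_of_ne_zero e k hc]

theorem zero_stepLe_oadd_of_fseq_omegaPow (h : stepLe n 0 (fseq (omegaPow e) n)) (k : ℕ+) :
    stepLe n 0 (oadd e k 0) := by
  induction k using PNat.recOn with
  | one => exact stepLe_of_stepLe_fseq h
  | succ k ih =>
    refine stepLe_trans ih (stepLe_of_stepLe_fseq ?_)
    rw [fseq_oadd_add_one]
    exact oadd_stepLe_oadd e k h

theorem zero_stepLe_oadd (h : stepLe n 0 e) (k : ℕ+) : stepLe n 0 (oadd e k 0) := by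
  induction h using stepLe_induction generalizing k with
  | refl =>
    apply zero_stepLe_oadd_of_fseq_omegaPow
    rw [fseq_omegaPow_zero]
    exact stepLe_refl n 0
  | step c hc _ ih =>
    apply zero_stepLe_oadd_of_fseq_omegaPow
    by_cases hs : c.isSucc
    · cases n with
      | zero =>
        rw [fseq_omegaPow_of_isSucc_zero hs]
        exact stepLe_refl 0 0
      | succ n =>
        rw [fseq_omegaPow_of_isSucc_add_one hs]
        exact ih n.succPNat
    · rw [fseq_omegaPow_of_not_isSucc hc hs]
      exact ih 1

theorem zero_stepLe (n : ℕ) (a : ONote) : stepLe n 0 a := by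
  induction a with
  | zero => exact stepLe_refl n 0
  | oadd e k b ihe ihb => exact stepLe_trans (zero_stepLe_oadd ihe k) (oadd_stepLe_oadd e k ihb)

theorem oadd_zero_stepLe_oadd_add_one_zero (n : ℕ) (e : ONote) (k : ℕ+) :
    stepLe n (oadd e k 0) (oadd e (k + 1) 0) := by
  apply stepLe_of_stepLe_fseq
  rw [fseq_oadd_add_one]
  exact oadd_stepLe_oadd e k (zero_stepLe n _)

theorem oadd_zero_stepLe_oadd_zero_of_le (n : ℕ) (e : ONote) {j k : ℕ+} (hjk : j ≤ k) :
    stepLe n (oadd e j 0) (oadd e k 0) := by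
  induction k using PNat.recOn with
  | one => rw [le_antisymm hjk one_le]; exact stepLe_refl n _
  | succ k ih =>
    rcases hjk.eq_or_lt with rfl | hlt
    · exact stepLe_refl n _
    · have hle : j ≤ k := PNat.lt_add_one_iff.1 hlt
      exact stepLe_trans (ih hle) (oadd_zero_stepLe_oadd_add_one_zero n e k)

theorem omegaPow_stepLe_omegaPow (hn : 0 < n) (h : stepLe n a b) :
    stepLe n (omegaPow a) (omegaPow b) := by
  induction h using stepLe_induction with
  | refl => exact stepLe_refl n _
  | step c hc _ ih =>
    refine stepLe_trans ih (stepLe_of_stepLe_fseq ?_)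
    by_cases hs : c.isSucc
    · obtain ⟨n, rfl⟩ := Nat.exists_eq_add_one.2 hn
      rw [fseq_omegaPow_of_isSucc_add_one hs]
      exact oadd_zero_stepLe_oadd_zero_of_le _ _ one_le
    · rw [fseq_omegaPow_of_not_isSucc hc hs]
      exact stepLe_refl n _

theorem fseq_omegaPow_stepLe_fseq_of_isSucc (hnm : n ≤ m) (he : e.isSucc) :
    stepLe m (fseq (omegaPow e) n) (fseq (omegaPow e) m) := by
  cases n with
  | zero =>
    rw [fseq_omegaPow_of_isSucc_zero he]
    exact zero_stepLe m _
  | succ n =>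
    obtain ⟨m, rfl⟩ := Nat.exists_eq_add_one.2 (Nat.zero_lt_of_lt hnm)
    rw [fseq_omegaPow_of_isSucc_add_one he, fseq_omegaPow_of_isSucc_add_one he,
      fseq_eq_of_isSucc he (n + 1) (m + 1)]
    have hnm' : n.succPNat ≤ m.succPNat := Nat.succPNat_le_succPNat.2 (Nat.le_of_succ_le_succ hnm)
    exact oadd_zero_stepLe_oadd_zero_of_le _ _ hnm'

theorem fseq_omegaPow_stepLe_fseq (hnm : n ≤ m) (he : stepLe m (fseq e n) (fseq e m)) :
    stepLe m (fseq (omegaPow e) n) (fseq (omegaPow e) m) := by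
  rcases eq_or_ne e 0 with rfl | he₀
  · rw [fseq_omegaPow_zero, fseq_omegaPow_zero]
    exact stepLe_refl m 0
  by_cases hs : e.isSucc
  · exact fseq_omegaPow_stepLe_fseq_of_isSucc hnm hs
  rcases hnm.eq_or_lt with rfl | hlt
  · exact stepLe_refl n _
  · rw [fseq_omegaPow_of_not_isSucc he₀ hs, fseq_omegaPow_of_not_isSucc he₀ hs]
    exact omegaPow_stepLe_omegaPow (Nat.zero_lt_of_lt hlt) he

theorem fseq_stepLe_fseq (hnm : n ≤ m) (b : ONote) : stepLe m (fseq b n) (fseq b m) := by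
  induction b with
  | zero => exact stepLe_refl m 0
  | oadd e k b ihe ihb =>
    rcases eq_or_ne b 0 with rfl | hb
    · have hpow := fseq_omegaPow_stepLe_fseq hnm ihe
      cases k using PNat.recOn with
      | one => exact hpow
      | succ k =>
        rw [fseq_oadd_add_one, fseq_oadd_add_one]
        exact oadd_stepLe_oadd e k hpow
    · rw [fseq_oadd_of_ne_zero e k hb, fseq_oadd_of_ne_zero e k hb]
      exact oadd_stepLe_oadd e k ihb

theorem fseq_stepLt_of_le (hnm : n ≤ m) (b : ONote) : stepLt m (fseq b n) b :=
  stepLt_of_stepLe_fseq (fseq_stepLe_fseq hnm b)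

theorem stepLt_mono_base_general (hnm : n ≤ m) (h : stepLt n a b) : stepLt m a b :=
  TransGen.closed (fun _ d hd => hd ▸ fseq_stepLt_of_le hnm d) a b h

end StepDown

/-- monotonicity of the step-down relation `<_n` in the base:
if `n ≤ m` and `α <_n β` then `α <_m β`. -/
theorem stepLt_mono_base (a b : ONote) (ha : a.NF) (hb : b.NF) (n m : ℕ)
    (hnm : n ≤ m) (h : ONote.stepLt n a b) : ONote.stepLt m a b :=
  stepLt_mono_base_general hnm h
end

section
/- The diagonal Ramsey function dominates all provably total computable functions of PA: define D(n,m,k) as the least K ≥ max(n+2, m) such that K →_Δ (k)^{1+n}_m, and D(n) = D(n,n,2n). Then for every function f : ℕ → ℕ that is provably computable in PA, there exists n₀ such that f(x) < D(n₀, n₀, n₀ + x) for all x, and hence the function n ↦ D(n) eventually dominates f. -/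
open FirstOrder FirstOrder.Language

/-- Function symbols of the language of PA: `0, 1, +, ·, x^y`. -/
inductive ArithFunc : ℕ → Type
  | zero : ArithFunc 0
  | one : ArithFunc 0
  | add : ArithFunc 2
  | mul : ArithFunc 2
  | exp : ArithFunc 2

/-- Relation symbols of the language of PA: `<` (equality is built in). -/
inductive ArithRel : ℕ → Type
  | lt : ArithRel 2

/-- The first-order language `{0, 1, +, ·, x^y, <, =}` of PA. -/
def LPA : FirstOrder.Language := ⟨ArithFunc, ArithRel⟩

/-- The standard model `ℕ`. -/
instance : LPA.Structure ℕ where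
  funMap {n} f v :=
    match f with
    | ArithFunc.zero => 0
    | ArithFunc.one => 1
    | ArithFunc.add => v 0 + v 1
    | ArithFunc.mul => v 0 * v 1
    | ArithFunc.exp => v 0 ^ v 1
  RelMap {n} r v :=
    match r with
    | ArithRel.lt => v 0 < v 1

section Model

variable {M : Type} [LPA.Structure M]

/-- Interpretation of `0`. -/
def pzero : M := Structure.funMap (L := LPA) ArithFunc.zero ![]
/-- Interpretation of `1`. -/
def pone : M := Structure.funMap (L := LPA) ArithFunc.one ![]
/-- Interpretation of `+`. -/
def padd (a b : M) : M := Structure.funMap (L := LPA) ArithFunc.add ![a, b]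
/-- Interpretation of `·`. -/
def pmul (a b : M) : M := Structure.funMap (L := LPA) ArithFunc.mul ![a, b]
/-- Interpretation of `x^y`. -/
def pexp (a b : M) : M := Structure.funMap (L := LPA) ArithFunc.exp ![a, b]
/-- Interpretation of `<`. -/
def plt (a b : M) : Prop := Structure.RelMap (L := LPA) ArithRel.lt ![a, b]

end Model

/-- `M` is a model of PA: the basic (Π₁) axioms for the constants
`0, 1, +, ·, x^y, <` hold, together with the induction scheme for all
first-order `LPA`-formulas (with parameters). -/
def IsPAModel (M : Type) [LPA.Structure M] : Prop :=
  (∀ a : M, padd a pzero = a) ∧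
  (∀ a b : M, padd a b = padd b a) ∧
  (∀ a b c : M, padd (padd a b) c = padd a (padd b c)) ∧
  (∀ a : M, pmul a pzero = pzero) ∧
  (∀ a : M, pmul a pone = a) ∧
  (∀ a b : M, pmul a b = pmul b a) ∧
  (∀ a b c : M, pmul (pmul a b) c = pmul a (pmul b c)) ∧
  (∀ a b c : M, pmul a (padd b c) = padd (pmul a b) (pmul a c)) ∧
  (∀ a : M, ¬ plt a a) ∧
  (∀ a b c : M, plt a b → plt b c → plt a c) ∧
  (∀ a b : M, plt a b ∨ a = b ∨ plt b a) ∧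
  (∀ a b c : M, plt a b → plt (padd a c) (padd b c)) ∧
  (∀ a : M, a = pzero ∨ plt pzero a) ∧
  (∀ a : M, plt a (padd a pone)) ∧
  (∀ a b : M, plt a b → (padd a pone = b ∨ plt (padd a pone) b)) ∧
  (∀ a : M, pexp a pzero = pone) ∧
  (∀ a b : M, pexp a (padd b pone) = pmul (pexp a b) a) ∧
  (∀ (n : ℕ) (φ : LPA.BoundedFormula Empty (n + 1)) (v : Fin n → M),
    φ.Realize (fun e => e.elim) (Fin.snoc v pzero) →
    (∀ x : M, φ.Realize (fun e => e.elim) (Fin.snoc v x) →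
      φ.Realize (fun e => e.elim) (Fin.snoc v (padd x pone))) →
    ∀ x : M, φ.Realize (fun e => e.elim) (Fin.snoc v x))

/-- `PA ⊢ σ`, rendered (equivalently, by the Gödel completeness theorem) as:
`σ` holds in every model of PA. -/
def PAproves (σ : LPA.Sentence) : Prop :=
  ∀ (M : Type) (_ : LPA.Structure M), IsPAModel M → M ⊨ σ

/-- The bounded formula `t₁ < t₂`. -/
def ltBF {n : ℕ} (t₁ t₂ : LPA.Term (Empty ⊕ Fin n)) : LPA.BoundedFormula Empty n :=
  Relations.boundedFormula₂ ArithRel.lt t₁ t₂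

/-- Lift a term in context `n` to context `n + 1`. -/
def liftT {n : ℕ} (t : LPA.Term (Empty ⊕ Fin n)) : LPA.Term (Empty ⊕ Fin (n + 1)) :=
  t.relabel (Sum.map id Fin.castSucc)

/-- The guard `x_n < t` on the last variable of context `n + 1`. -/
def guardLt {n : ℕ} (t : LPA.Term (Empty ⊕ Fin n)) : LPA.BoundedFormula Empty (n + 1) :=
  ltBF (Term.var (Sum.inr (Fin.last n))) (liftT t)

/-- The class of `Δ₀` (bounded) formulas: atomic formulas, closed under `⊥`,
`→` (hence all propositional connectives) and bounded quantification
`∀ x < t` and `∃ x < t`. -/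
inductive Delta0 : ∀ {n : ℕ}, LPA.BoundedFormula Empty n → Prop
  | falsum {n : ℕ} : Delta0 (n := n) BoundedFormula.falsum
  | equal {n : ℕ} (t₁ t₂ : LPA.Term (Empty ⊕ Fin n)) : Delta0 (Term.bdEqual t₁ t₂)
  | lt {n : ℕ} (t₁ t₂ : LPA.Term (Empty ⊕ Fin n)) : Delta0 (ltBF t₁ t₂)
  | imp {n : ℕ} {φ ψ : LPA.BoundedFormula Empty n} :
      Delta0 φ → Delta0 ψ → Delta0 (φ.imp ψ)
  | bdAll {n : ℕ} (t : LPA.Term (Empty ⊕ Fin n)) {φ : LPA.BoundedFormula Empty (n + 1)} :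
      Delta0 φ → Delta0 ((guardLt t).imp φ).all
  | bdEx {n : ℕ} (t : LPA.Term (Empty ⊕ Fin n)) {φ : LPA.BoundedFormula Empty (n + 1)} :
      Delta0 φ → Delta0 ((guardLt t).imp φ.not).all.not

/-- `H` is *diagonal homogeneous* for a partition `P` of `(1+n)`-element sets:
for `x₀ ∈ H`, `a < x₀`, and `n`-element subsets `Y, Z ⊆ H` lying entirely above
`x₀`, the colors of `{a} ∪ Y` and `{a} ∪ Z` agree. -/
def DiagHom (n : ℕ) {c : ℕ} (P : Finset ℕ → Fin c) (H : Finset ℕ) : Prop :=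
  ∀ x₀ ∈ H, ∀ a < x₀, ∀ Y Z : Finset ℕ, Y ⊆ H → Z ⊆ H →
    Y.card = n → Z.card = n → (∀ y ∈ Y, x₀ < y) → (∀ z ∈ Z, x₀ < z) →
    P (insert a Y) = P (insert a Z)

/-- `K →_Δ (m)^{1+n}_c` : every `c`-coloring of the `(1+n)`-element subsets of
`{0,…,K−1}` admits a diagonal homogeneous set of size `m`. -/
def ArrowDiag (K m n c : ℕ) : Prop :=
  ∀ P : Finset ℕ → Fin c, ∃ H : Finset ℕ,
    H ⊆ Finset.range K ∧ H.card = m ∧ DiagHom n P H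

/-- The diagonal Ramsey function: `D(n,m,k)` is the least
`K ≥ max(n+2, m)` with `K →_Δ (k)^{1+n}_m` (DH guarantees existence). -/
noncomputable def Dfun (n m k : ℕ) : ℕ :=
  sInf {K : ℕ | max (n + 2) m ≤ K ∧ ArrowDiag K k n m}

/-!
Iterated limits of a colouring along a nonprincipal ultrafilter yield diagonal homogeneous sets,
so `Dfun` attains its infimum. Suppose `D(n, n, n + c n) ≤ f (c n)` for all `n`. Since `c n → ∞`,
colouring below `D(n, n, n + c n)` by the first few of a countable list of predicates produces
sequences `h n` of diagonal indiscernibles with `h n i < f (c n)` and `c n ≤ 2 * h n 0 + 1`.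
Indiscernibility for subtraction, division and logarithm forces the `h n i`, as functions of `n`,
to grow so fast that the initial segment they generate in the ultrapower `ℕ^ℕ / U` is closed under
`+`, `·` and exponentiation. Indiscernibility for truth with quantifiers bounded by the `h n i`
makes truth in this cut agree with such bounded truth modulo `U`, so induction in the cut reduces
to induction in `ℕ`, and the cut is a model of PA. By `Δ₀`-absoluteness the value of `f` that PA
provides at the element `c` of the cut is `f c`, which however lies above the whole cut.
-/

open Filter

section DiagonalRamsey

theorem exists_eventually_eq {ι α : Type*} [Finite α] (U : Ultrafilter ι) (g : ι → α) :
    ∃ a, ∀ᶠ x in U, g x = a :=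
  Ultrafilter.eventually_exists_iff.1 (.of_forall fun x => ⟨g x, rfl⟩)

theorem exists_iterated_limit {α : Type*} [Finite α] (P : Finset ℕ → α) :
    ∃ c : ℕ → Finset ℕ → α, c 0 = P ∧
      ∀ r S, ∀ᶠ x in hyperfilter ℕ, c r (insert x S) = c (r + 1) S := by
  choose lim h_lim using fun (Q : Finset ℕ → α) (S : Finset ℕ) =>
    exists_eventually_eq (hyperfilter ℕ) fun x => Q (insert x S)
  exact ⟨fun r => lim^[r] P, rfl, fun r S => by
    simpa only [Function.iterate_succ_apply'] using h_lim (lim^[r] P) S⟩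

/-- For iterated limits `c r` of a colouring `c 0` of `(n + 1)`-element sets (`c r` has `r` of the
elements sent to infinity), `H` is limit homogeneous if letting the elements of `H` above a
witness `x₀ ∈ H` go to infinity does not change the colour. -/
def LimitHomogeneous {α : Type*} (c : ℕ → Finset ℕ → α) (n : ℕ) (H : Finset ℕ) : Prop :=
  ∀ x₀ ∈ H, ∀ a < x₀, ∀ Y ⊆ H, (∀ y ∈ Y, x₀ < y) →
    ∀ r, r + Y.card = n → c r (insert a Y) = c n {a}

theorem LimitHomogeneous.diagHom {m n : ℕ} {c : ℕ → Finset ℕ → Fin m} {H : Finset ℕ}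
    (hH : LimitHomogeneous c n H) : DiagHom n (c 0) H := by
  intro x₀ hx₀ a ha Y Z hY hZ hYn hZn hxY hxZ
  rw [hH x₀ hx₀ a ha Y hY hxY 0 (by omega), hH x₀ hx₀ a ha Z hZ hxZ 0 (by omega)]

theorem LimitHomogeneous.insert_of_forall_lt {α : Type*} {c : ℕ → Finset ℕ → α} {n x : ℕ}
    {H : Finset ℕ} (hH : LimitHomogeneous c n H) (hx : ∀ y ∈ H, y < x)
    (h_lim : ∀ r < n, ∀ x₀ ∈ H, ∀ a < x₀, ∀ Y ⊆ H,
      c r (insert x (insert a Y)) = c (r + 1) (insert a Y)) :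
    LimitHomogeneous c n (insert x H) := by
  intro x₀ hx₀ a ha Y hY hxY r hr
  rcases Finset.mem_insert.1 hx₀ with rfl | hx₀H
  · have hY_empty : Y = ∅ := Finset.eq_empty_of_forall_notMem fun y hy =>
      (Finset.mem_insert.1 (hY hy)).elim (hxY y hy).ne' fun hyH => (hxY y hy).asymm (hx y hyH)
    subst hY_empty
    rw [← hr, Finset.card_empty, add_zero, insert_empty_eq]
  by_cases hx_mem : x ∈ Y
  · have h_sub : Y.erase x ⊆ H := Finset.subset_insert_iff.1 hY
    have h_card := Finset.card_erase_add_one hx_mem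
    calc c r (insert a Y) = c r (insert x (insert a (Y.erase x))) := by
          rw [Finset.insert_comm, Finset.insert_erase hx_mem]
      _ = c (r + 1) (insert a (Y.erase x)) := h_lim r (by omega) x₀ hx₀H a ha _ h_sub
      _ = c n {a} := hH x₀ hx₀H a ha _ h_sub (fun y hy => hxY y (Finset.mem_of_mem_erase hy))
          (r + 1) (by omega)
  · exact hH x₀ hx₀H a ha Y ((Finset.subset_insert_iff_of_notMem hx_mem).1 hY) hxY r hr

theorem eventually_hyperfilter_forall_lt (H : Finset ℕ) :
    ∀ᶠ x in hyperfilter ℕ, ∀ y ∈ H, y < x :=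
  (eventually_all_finset H).2 fun y _ =>
    (eventually_gt_atTop y).filter_mono Nat.hyperfilter_le_atTop

theorem exists_limitHomogeneous {α : Type*} {c : ℕ → Finset ℕ → α}
    (h_lim : ∀ r S, ∀ᶠ x in hyperfilter ℕ, c r (insert x S) = c (r + 1) S) (n k : ℕ) :
    ∃ H : Finset ℕ, H.card = k ∧ LimitHomogeneous c n H := by
  induction k with
  | zero => exact ⟨∅, rfl, fun x₀ hx₀ => absurd hx₀ (Finset.notMem_empty x₀)⟩
  | succ k ih =>
    obtain ⟨H, hHk, hH⟩ := ih
    have h_ev : ∀ᶠ x in hyperfilter ℕ, ∀ r ∈ Finset.range n, ∀ x₀ ∈ H, ∀ a ∈ Finset.range x₀,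
        ∀ Y ∈ H.powerset, c r (insert x (insert a Y)) = c (r + 1) (insert a Y) := by
      simp only [eventually_all_finset]
      exact fun r _ x₀ _ a _ Y _ => h_lim r _
    obtain ⟨x, hx, hx_lim⟩ := ((eventually_hyperfilter_forall_lt H).and h_ev).exists
    refine ⟨insert x H, ?_, hH.insert_of_forall_lt hx ?_⟩
    · rw [Finset.card_insert_of_notMem fun h => (hx x h).false, hHk]
    · simpa only [Finset.mem_range, Finset.mem_powerset] using hx_lim

theorem exists_diagHom (n : ℕ) {m : ℕ} (P : Finset ℕ → Fin m) (k : ℕ) :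
    ∃ H : Finset ℕ, H.card = k ∧ DiagHom n P H := by
  obtain ⟨c, rfl, h_lim⟩ := exists_iterated_limit P
  obtain ⟨H, hHk, hH⟩ := exists_limitHomogeneous h_lim n k
  exact ⟨H, hHk, hH.diagHom⟩

theorem DiagHom.congr {n m : ℕ} {P Q : Finset ℕ → Fin m} {H : Finset ℕ} (hQ : DiagHom n Q H)
    (hPQ : ∀ x₀ ∈ H, ∀ a < x₀, ∀ Y ⊆ H, P (insert a Y) = Q (insert a Y)) : DiagHom n P H := by
  intro x₀ hx₀ a ha Y Z hY hZ hYn hZn hxY hxZ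
  rw [hPQ x₀ hx₀ a ha Y hY, hPQ x₀ hx₀ a ha Z hZ]
  exact hQ x₀ hx₀ a ha Y Z hY hZ hYn hZn hxY hxZ

theorem exists_arrowDiag (n m k B : ℕ) : ∃ K, B ≤ K ∧ ArrowDiag K k n m := by
  by_contra! h_none
  simp only [ArrowDiag] at h_none
  push Not at h_none
  choose P hP using fun K => h_none (max B K) (le_max_left _ _)
  choose Q hQ using fun S : Finset ℕ => exists_eventually_eq (hyperfilter ℕ) fun K => P K S
  obtain ⟨H, hHk, hH⟩ := exists_diagHom n Q k
  have h_ev : ∀ᶠ K in hyperfilter ℕ, ∀ x₀ ∈ H, ∀ a ∈ Finset.range x₀, ∀ Y ∈ H.powerset,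
      P K (insert a Y) = Q (insert a Y) := by
    simp only [eventually_all_finset]
    exact fun x₀ _ a _ Y _ => hQ _
  obtain ⟨K, hK, hPQ⟩ := ((eventually_hyperfilter_forall_lt H).and h_ev).exists
  refine hP K H (fun y hy => Finset.mem_range.2 (lt_max_of_lt_right (hK y hy))) hHk
    (hH.congr ?_)
  simpa only [Finset.mem_range, Finset.mem_powerset] using hPQ

theorem dfun_spec (n m k : ℕ) :
    max (n + 2) m ≤ Dfun n m k ∧ ArrowDiag (Dfun n m k) k n m :=
  Nat.sInf_mem (exists_arrowDiag n m k (max (n + 2) m))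

theorem dfun_le {n m k K : ℕ} (hK : max (n + 2) m ≤ K) (h : ArrowDiag K k n m) :
    Dfun n m k ≤ K :=
  Nat.sInf_le ⟨hK, h⟩

theorem ArrowDiag.of_le_colors {K k n c c' : ℕ} (hc : c ≤ c') (h : ArrowDiag K k n c') :
    ArrowDiag K k n c := by
  intro P
  obtain ⟨H, hHK, hHk, hH⟩ := h fun S => Fin.castLE hc (P S)
  exact ⟨H, hHK, hHk, fun x₀ hx₀ a ha Y Z hY hZ hYn hZn hxY hxZ =>
    Fin.castLE_injective hc (hH x₀ hx₀ a ha Y Z hY hZ hYn hZn hxY hxZ)⟩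

theorem erase_sup_insert {S : Finset ℕ} {M : ℕ} (hM : ∀ y ∈ S, y < M) :
    (insert M S).erase ((insert M S).sup id) = S := by
  have h_sup : (insert M S).sup id = M := by
    rw [Finset.sup_insert, id, sup_eq_left]
    exact Finset.sup_le fun y hy => (hM y hy).le
  rw [h_sup, Finset.erase_insert fun h => (hM M h).false]

theorem ArrowDiag.of_succ {K k n c : ℕ} (h : ArrowDiag K (k + 1) (n + 1) c) :
    ArrowDiag K k n c := by
  intro P
  obtain ⟨H, hHK, hHk, hH⟩ := h fun S => P (S.erase (S.sup id))
  obtain ⟨M, hM, hM_sup⟩ := H.exists_mem_eq_sup (Finset.card_pos.1 (by omega)) id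
  have h_lt : ∀ y ∈ H.erase M, y < M := fun y hy =>
    lt_of_le_of_ne ((Finset.le_sup (f := id) (Finset.mem_of_mem_erase hy)).trans_eq hM_sup)
      (Finset.ne_of_mem_erase hy)
  have h_card : (H.erase M).card = k := by
    rw [Finset.card_erase_of_mem hM, hHk, Nat.add_sub_cancel]
  refine ⟨H.erase M, (H.erase_subset M).trans hHK, h_card, ?_⟩
  intro x₀ hx₀ a ha Y Z hY hZ hYn hZn hxY hxZ
  have h_insert : ∀ W ⊆ H.erase M, W.card = n → (∀ y ∈ W, x₀ < y) →
      insert M W ⊆ H ∧ (insert M W).card = n + 1 ∧ (∀ y ∈ insert M W, x₀ < y) ∧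
        (insert a (insert M W)).erase ((insert a (insert M W)).sup id) = insert a W := by
    intro W hW hWn hxW
    refine ⟨Finset.insert_subset hM (hW.trans (H.erase_subset M)), ?_, ?_, ?_⟩
    · rw [Finset.card_insert_of_notMem fun hMW => Finset.notMem_erase M H (hW hMW), hWn]
    · exact (Finset.forall_mem_insert _ _ _).2 ⟨h_lt x₀ hx₀, hxW⟩
    · rw [Finset.insert_comm]
      exact erase_sup_insert ((Finset.forall_mem_insert _ _ _).2
        ⟨ha.trans (h_lt x₀ hx₀), fun y hy => h_lt y (hW hy)⟩)
  obtain ⟨hY_sub, hY_card, hxMY, hY_erase⟩ := h_insert Y hY hYn hxY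
  obtain ⟨hZ_sub, hZ_card, hxMZ, hZ_erase⟩ := h_insert Z hZ hZn hxZ
  simpa only [hY_erase, hZ_erase] using hH x₀ (Finset.mem_of_mem_erase hx₀) a ha _ _
    hY_sub hZ_sub hY_card hZ_card hxMY hxMZ

theorem ArrowDiag.of_add {K k n c : ℕ} (d : ℕ) (h : ArrowDiag K (k + d) (n + d) c) :
    ArrowDiag K k n c := by
  induction d with
  | zero => exact h
  | succ d ih => exact ih h.of_succ

theorem dfun_le_dfun_add {n c c' k : ℕ} (hc : c ≤ c') (d : ℕ) :
    Dfun n c k ≤ Dfun (n + d) c' (k + d) := by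
  obtain ⟨h_le, h_arrow⟩ := dfun_spec (n + d) c' (k + d)
  exact dfun_le (by omega) ((h_arrow.of_le_colors hc).of_add d)

end DiagonalRamsey

section Indiscernibles

theorem exists_strictMono_forall_mem (H : Finset ℕ) :
    ∃ g : ℕ → ℕ, StrictMono g ∧ ∀ i < H.card, g i ∈ H := by
  set B := H.sup id
  have hB : ∀ y ∈ H, y ≤ B := fun y hy => Finset.le_sup (f := id) hy
  have h_inf : {y | y ∈ H ∨ B < y}.Infinite :=
    (Set.Ioi_infinite B).mono fun y hy => Or.inr hy
  have h_count : Nat.count (fun y => y ∈ H ∨ B < y) (B + 1) = H.card := by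
    rw [Nat.count_eq_card_filter_range]
    congr 1
    ext y
    have := hB y
    grind
  refine ⟨Nat.nth fun y => y ∈ H ∨ B < y, Nat.nth_strictMono h_inf, fun i hi => ?_⟩
  have h_lt : Nat.nth (fun y => y ∈ H ∨ B < y) i < B + 1 :=
    Nat.nth_lt_of_lt_count (hi.trans_eq h_count.symm)
  exact (Nat.nth_mem_of_infinite h_inf i).resolve_right (by omega)

theorem nth_mem_image_range {w : ℕ → ℕ} (hw : StrictMono w) {i N : ℕ} (hi : i < N) :
    Nat.nth (· ∈ (Finset.range N).image w) i = w i := by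
  have h_filter : {y ∈ Finset.range (w i) | y ∈ (Finset.range N).image w} =
      (Finset.range i).image w := by
    ext y
    simp only [Finset.mem_filter, Finset.mem_range, Finset.mem_image]
    refine ⟨fun ⟨hy, j, _, hj⟩ => ⟨j, hw.lt_iff_lt.1 (hj ▸ hy), hj⟩, ?_⟩
    rintro ⟨j, hj, rfl⟩
    exact ⟨hw hj, j, hj.trans hi, rfl⟩
  have h_count : Nat.count (· ∈ (Finset.range N).image w) (w i) = i := by
    rw [Nat.count_eq_card_filter_range, h_filter, Finset.card_image_of_injective _ hw.injective,
      Finset.card_range]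
  simpa only [h_count] using Nat.nth_count (p := (· ∈ (Finset.range N).image w))
    (Finset.mem_image_of_mem w (Finset.mem_range.2 hi))

theorem ArrowDiag.exists_strictMono_color_eq {K k n m : ℕ} (hA : ArrowDiag K k n m)
    {Q : ℕ → (ℕ → ℕ) → Fin m} (hQ : ∀ a, DependsOn (Q a) (Set.Iio n)) :
    ∃ g : ℕ → ℕ, StrictMono g ∧ (∀ i < k, g i < K) ∧
      ∀ i < k, ∀ j j' : ℕ → ℕ, StrictMono j → StrictMono j' → i < j 0 → i < j' 0 →
        (∀ p < n, j p < k) → (∀ p < n, j' p < k) → ∀ a < g i, Q a (g ∘ j) = Q a (g ∘ j') := by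
  obtain ⟨H, hHK, hHk, hH⟩ := hA fun S =>
    Q (Nat.nth (· ∈ S) 0) fun p => Nat.nth (· ∈ S) (p + 1)
  obtain ⟨g, hg, hgH⟩ := exists_strictMono_forall_mem H
  rw [hHk] at hgH
  refine ⟨g, hg, fun i hi => Finset.mem_range.1 (hHK (hgH i hi)), ?_⟩
  intro i hi j j' hj hj' hij hij' hjk hjk' a ha
  have h_color : ∀ j : ℕ → ℕ, StrictMono j → i < j 0 → (∀ p < n, j p < k) →
      ∃ Y ⊆ H, Y.card = n ∧ (∀ y ∈ Y, g i < y) ∧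
        Q (Nat.nth (· ∈ insert a Y) 0) (fun p => Nat.nth (· ∈ insert a Y) (p + 1)) =
          Q a (g ∘ j) := by
    intro j hj hij hjk
    have hij_p : ∀ p, i < j p := fun p => hij.trans_le (hj.monotone p.zero_le)
    let w : ℕ → ℕ := fun p => Nat.casesOn p a (g ∘ j)
    have hw : StrictMono w := strictMono_nat_of_lt_succ fun p => by
      cases p with
      | zero => exact ha.trans (hg (hij_p 0))
      | succ p => exact (hg.comp hj) p.lt_add_one
    have h_insert : insert a ((Finset.range n).image (g ∘ j)) =
        (Finset.range (n + 1)).image w := by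
      rw [Finset.range_add_one', Finset.image_insert, Finset.map_eq_image, Finset.image_image]
      rfl
    refine ⟨(Finset.range n).image (g ∘ j), ?_, ?_, ?_, ?_⟩
    · exact Finset.image_subset_iff.2 fun p hp => hgH _ (hjk p (Finset.mem_range.1 hp))
    · rw [Finset.card_image_of_injective _ (hg.comp hj).injective, Finset.card_range]
    · exact Finset.forall_mem_image.2 fun p _ => hg (hij_p p)
    · rw [h_insert, nth_mem_image_range hw n.succ_pos]
      exact hQ a fun p hp => nth_mem_image_range hw (Nat.succ_lt_succ hp)
  obtain ⟨Y, hYH, hYn, hY, hQY⟩ := h_color j hj hij hjk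
  obtain ⟨Z, hZH, hZn, hZ, hQZ⟩ := h_color j' hj' hij' hjk'
  rw [← hQY, ← hQZ]
  exact hH (g i) (hgH i hi) a ha Y Z hYH hZH hYn hZn hY hZ

theorem exists_strictMono_eqOn_Iio {j : ℕ → ℕ} (hj : StrictMono j) (t : ℕ) :
    ∃ j' : ℕ → ℕ, StrictMono j' ∧ j' 0 = j 0 ∧ (∀ p < t, j' p = j p) ∧ ∀ p, j' p ≤ j t + p := by
  refine ⟨fun p => j (min p t) + (p - t), strictMono_nat_of_lt_succ fun p => ?_, by simp,
    fun p hp => ?_, fun p => ?_⟩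
  · rcases lt_or_ge p t with hp | hp
    · simpa [min_eq_left hp.le, min_eq_left (Nat.succ_le_of_lt hp), Nat.sub_eq_zero_of_le hp.le,
        Nat.sub_eq_zero_of_le (Nat.succ_le_of_lt hp)] using hj p.lt_add_one
    · simp only [min_eq_right hp, min_eq_right (hp.trans p.le_succ)]
      omega
  · simp only [min_eq_left hp.le, Nat.sub_eq_zero_of_le hp.le, add_zero]
  · exact Nat.add_le_add (hj.monotone (min_le_right p t)) (p.sub_le t)

theorem ArrowDiag.exists_indiscernible {K n c : ℕ} (hA : ArrowDiag K (n + c) n n) (hn : n ≠ 0)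
    {R : ℕ → ℕ → (ℕ → ℕ) → Prop} {t : ℕ → ℕ} (hR : ∀ e a, DependsOn (R e a) (Set.Iio (t e))) :
    ∃ g : ℕ → ℕ, StrictMono g ∧ (∀ i < n + c, g i < K) ∧
      ∀ e, 2 ^ (e + 1) ≤ n → t e ≤ n → ∀ i (j k : ℕ → ℕ), StrictMono j → StrictMono k →
        i < j 0 → i < k 0 → j (t e) ≤ c → k (t e) ≤ c → ∀ a < g i,
          (R e a (g ∘ j) ↔ R e a (g ∘ k)) := by
  classical
  obtain ⟨code⟩ : Nonempty ((Fin (Nat.log 2 n) → Bool) ↪ Fin n) :=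
    Function.Embedding.nonempty_of_card_le (by simpa using Nat.pow_log_le_self 2 hn)
  let trunc (b : ℕ → ℕ) (p : ℕ) : ℕ := if p < n then b p else 0
  have h_trunc : DependsOn trunc (Set.Iio n) := fun b b' hb => funext fun p => by
    by_cases hp : p < n
    · simp only [trunc, if_pos hp, hb p hp]
    · simp only [trunc, if_neg hp]
  obtain ⟨g, hg, hgK, hgQ⟩ := hA.exists_strictMono_color_eq
    (Q := fun a b => code fun e => decide (R e a (trunc b))) fun a b b' hb =>
      congrArg (fun b => code fun e => decide (R e a b)) (h_trunc hb)
  refine ⟨g, hg, hgK, fun e he hte i j k hj hk hij hik hjc hkc a ha => ?_⟩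
  obtain ⟨j', hj', hj'_zero, hj'_eq, hj'_le⟩ := exists_strictMono_eqOn_Iio hj (t e)
  obtain ⟨k', hk', hk'_zero, hk'_eq, hk'_le⟩ := exists_strictMono_eqOn_Iio hk (t e)
  have h_ext : ∀ j j' : ℕ → ℕ, (∀ p < t e, j' p = j p) →
      R e a (g ∘ j) = R e a (trunc (g ∘ j')) := fun j j' hjj' =>
    hR e a fun p hp => by
      simp only [trunc, if_pos (lt_of_lt_of_le (Set.mem_Iio.1 hp) hte), Function.comp, hjj' p hp]
  have h_color := hgQ i (by have := hj.monotone (t e).zero_le; omega) j' k' hj' hk'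
    (hij.trans_eq hj'_zero.symm) (hik.trans_eq hk'_zero.symm)
    (fun p hp => by have := hj'_le p; omega) (fun p hp => by have := hk'_le p; omega) a ha
  rw [h_ext j j' hj'_eq, h_ext k k' hk'_eq]
  exact decide_eq_decide.1 <| congrFun (code.injective h_color)
    ⟨e, Nat.le_log_of_pow_le one_lt_two he⟩

/-- Diagonal indiscernibility along a filter: for almost all `n`, the truth value of `R a` at an
increasing tuple of entries of the sequence `h n` beyond `h n i` is the same for all such tuples,
uniformly in the parameters `a < h n i`. Tuples are infinite subsequences so that predicates of
different arities can be treated alike. -/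
def DiagIndisc {ι : Type*} (l : Filter ι) (h : ι → ℕ → ℕ) (R : ℕ → (ℕ → ℕ) → Prop) : Prop :=
  ∀ i (j k : ℕ → ℕ), StrictMono j → StrictMono k → i < j 0 → i < k 0 →
    ∀ᶠ n in l, ∀ a < h n i, (R a (h n ∘ j) ↔ R a (h n ∘ k))

theorem DiagIndisc.filter_mono {ι : Type*} {l l' : Filter ι} {h : ι → ℕ → ℕ}
    {R : ℕ → (ℕ → ℕ) → Prop} (hR : DiagIndisc l h R) (hl : l' ≤ l) : DiagIndisc l' h R :=
  fun i j k hj hk hij hik => (hR i j k hj hk hij hik).filter_mono hl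

theorem exists_diagIndisc {ε : Type*} [Countable ε] [Nonempty ε] {R : ε → ℕ → (ℕ → ℕ) → Prop}
    {t : ε → ℕ} (hR : ∀ e a, DependsOn (R e a) (Set.Iio (t e))) {K c : ℕ → ℕ}
    (hc : Tendsto c atTop atTop) (hA : ∀ n, ArrowDiag (K n) (n + c n) n n) :
    ∃ h : ℕ → ℕ → ℕ, (∀ᶠ n in atTop, StrictMono (h n)) ∧ (∀ e, DiagIndisc atTop h (R e)) ∧
      (∀ i, ∀ᶠ n in atTop, h n i < K n) ∧ ∀ᶠ n in atTop, c n ≤ 2 * h n 0 + 1 := by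
  obtain ⟨q, hq⟩ := exists_surjective_nat ε
  choose! g hg hgK hgR using fun n (hn : n ≠ 0) =>
    (hA n).exists_indiscernible hn fun e => hR (q e)
  -- Starting halfway up the homogeneous set keeps infinitely many elements below `K n` while
  -- forcing `h n 0` to be of the order of `c n`.
  refine ⟨fun n i => g n (i + c n / 2), ?_, fun e i j k hj hk hij hik => ?_, fun i => ?_, ?_⟩
  · filter_upwards [eventually_ne_atTop 0] with n hn
    exact (hg n hn).comp (strictMono_id.add_const _)
  · obtain ⟨e, rfl⟩ := hq e
    filter_upwards [eventually_ne_atTop 0, eventually_ge_atTop (2 ^ (e + 1)),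
      eventually_ge_atTop (t (q e)), hc.eventually_ge_atTop (2 * j (t (q e))),
      hc.eventually_ge_atTop (2 * k (t (q e)))] with n hn hen htn hjc hkc
    exact hgR n hn e hen htn _ (fun m => j m + c n / 2) (fun m => k m + c n / 2)
      (hj.add_const _) (hk.add_const _) (by omega) (by omega) (by omega) (by omega)
  · filter_upwards [eventually_ne_atTop 0, hc.eventually_ge_atTop (2 * i)] with n hn hic
    exact hgK n hn _ (by omega)
  · filter_upwards [eventually_ne_atTop 0] with n hn
    have := (hg n hn).le_apply (x := 0 + c n / 2)
    omega

section Growth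

variable {ι : Type*} {l : Filter ι} {h : ι → ℕ → ℕ}

theorem DiagIndisc.eventually_eq_of_lt {f : ℕ → ℕ → ℕ}
    (hf : DiagIndisc l h fun a b => f (b 0) (b 1) = a) {i j k p q : ℕ} (hij : i < j) (hjk : j < k)
    (hip : i < p) (hpq : p < q) :
    ∀ᶠ n in l, f (h n j) (h n k) < h n i → f (h n p) (h n q) = f (h n j) (h n k) := by
  have h_seq : ∀ x y, x < y → StrictMono fun m => x + m * (y - x) := fun x y hxy =>
    (strictMono_mul_right_of_pos (Nat.sub_pos_of_lt hxy)).const_add x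
  filter_upwards [hf i _ _ (h_seq j k hjk) (h_seq p q hpq) (by omega) (by omega)] with n hn hlt
  simpa [Nat.add_sub_cancel' hjk.le, Nat.add_sub_cancel' hpq.le] using hn _ hlt

theorem DiagIndisc.add_le (h_mono : ∀ᶠ n in l, StrictMono (h n))
    (h_sub : DiagIndisc l h fun a b => b 1 - b 0 = a) {i j k : ℕ} (hij : i < j) (hjk : j < k) :
    ∀ᶠ n in l, h n i + h n j ≤ h n k := by
  filter_upwards [h_mono, h_sub.eventually_eq_of_lt (f := fun x y => y - x) hij hjk hij
    (hjk.trans k.lt_add_one)] with n hn h_eq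
  have := hn hjk
  have := hn k.lt_add_one
  omega

/-- Along `p < q < q + 1` a value `f (h j) (h k) = a < h i` would satisfy `a * a ≤ a`. -/
theorem DiagIndisc.le_of_mul_le {f : ℕ → ℕ → ℕ}
    (hf : DiagIndisc l h fun a b => f (b 0) (b 1) = a) (h_mul : ∀ x y z, f x y * f y z ≤ f x z)
    {i p q : ℕ} (hip : i < p) (hpq : p < q) (h_two : ∀ᶠ n in l, 2 ≤ f (h n p) (h n q))
    {j k : ℕ} (hij : i < j) (hjk : j < k) : ∀ᶠ n in l, h n i ≤ f (h n j) (h n k) := by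
  filter_upwards [h_two, hf.eventually_eq_of_lt hij hjk hip hpq,
    hf.eventually_eq_of_lt hij hjk (hip.trans hpq) q.lt_add_one,
    hf.eventually_eq_of_lt hij hjk hip (hpq.trans q.lt_add_one)] with n h_two h_pq h_qr h_pr
  by_contra! hlt
  have h_sq := h_mul (h n p) (h n q) (h n (q + 1))
  rw [h_qr hlt, h_pr hlt, h_pq hlt] at h_sq
  rw [h_pq hlt] at h_two
  nlinarith

theorem log_mul_log_le (x y z : ℕ) : Nat.log x y * Nat.log y z ≤ Nat.log x z := by
  rcases eq_or_ne (Nat.log x y) 0 with h_xy | h_xy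
  · simp [h_xy]
  rcases eq_or_ne (Nat.log y z) 0 with h_yz | h_yz
  · simp [h_yz]
  have hx : 1 < x := (Nat.log_pos_iff.1 (Nat.pos_of_ne_zero h_xy)).2
  have hy : y ≠ 0 := by rintro rfl; simp at h_xy
  have hz : z ≠ 0 := by rintro rfl; simp at h_yz
  refine Nat.le_log_of_pow_le hx ?_
  calc x ^ (Nat.log x y * Nat.log y z) = (x ^ Nat.log x y) ^ Nat.log y z := pow_mul _ _ _
    _ ≤ y ^ Nat.log y z := Nat.pow_le_pow_left (Nat.pow_log_le_self x hy) _
    _ ≤ z := Nat.pow_log_le_self y hz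

theorem DiagIndisc.mul_le (h_mono : ∀ᶠ n in l, StrictMono (h n))
    (h_sub : DiagIndisc l h fun a b => b 1 - b 0 = a)
    (h_div : DiagIndisc l h fun a b => b 1 / b 0 = a) {i j k : ℕ} (hij : i < j) (hjk : j < k) :
    ∀ᶠ n in l, h n i * h n j ≤ h n k := by
  have h_two : ∀ᶠ n in l, 2 ≤ h n (i + 3) / h n (i + 1) := by
    filter_upwards [h_mono, h_sub.add_le h_mono (i := i + 1) (j := i + 2) (k := i + 3)
      (by omega) (by omega)] with n hn h_add
    have := hn i.lt_add_one
    have := hn (show i + 1 < i + 2 by omega)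
    rw [Nat.le_div_iff_mul_le (by omega)]
    omega
  have h_mul : ∀ x y z : ℕ, y / x * (z / y) ≤ z / x := fun x y z => by
    rcases y.eq_zero_or_pos with rfl | hy
    · simp
    calc y / x * (z / y) ≤ y * z / (x * y) := Nat.div_mul_div_le y x z y
      _ = z / x := by rw [mul_comm x, Nat.mul_div_mul_left _ _ hy]
  filter_upwards [h_mono, h_div.le_of_mul_le (f := fun x y => y / x) h_mul (by omega) (by omega)
    h_two hij hjk] with n hn h_le
  exact (Nat.le_div_iff_mul_le (Nat.zero_lt_of_lt (hn hij))).1 h_le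

theorem DiagIndisc.pow_le (h_mono : ∀ᶠ n in l, StrictMono (h n))
    (h_sub : DiagIndisc l h fun a b => b 1 - b 0 = a)
    (h_div : DiagIndisc l h fun a b => b 1 / b 0 = a)
    (h_log : DiagIndisc l h fun a b => Nat.log (b 0) (b 1) = a) {i j k : ℕ} (hij : i < j)
    (hjk : j < k) : ∀ᶠ n in l, h n j ^ h n i ≤ h n k := by
  have h_two : ∀ᶠ n in l, 2 ≤ Nat.log (h n (i + 2)) (h n (i + 4)) := by
    filter_upwards [h_mono, h_sub.mul_le h_mono h_div (i := i + 2) (j := i + 3) (k := i + 4)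
      (by omega) (by omega)] with n hn h_mul
    have := hn.le_apply (x := i + 2)
    refine Nat.le_log_of_pow_le (by omega) ?_
    calc h n (i + 2) ^ 2 ≤ h n (i + 2) * h n (i + 3) := by
          rw [sq]
          exact Nat.mul_le_mul_left _ (hn (Nat.lt_add_one _)).le
      _ ≤ h n (i + 4) := h_mul
  filter_upwards [h_mono, h_log.le_of_mul_le log_mul_log_le (by omega) (by omega) h_two hij hjk]
    with n hn h_le
  have hk : h n k ≠ 0 := (Nat.zero_lt_of_lt (hn hjk)).ne'
  exact Nat.pow_le_of_le_log hk h_le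

end Growth

end Indiscernibles

section Absoluteness

variable {M : Type} [LPA.Structure M]

theorem realize_guardLt_imp_all {l : ℕ} (t : LPA.Term (Empty ⊕ Fin l))
    (φ : LPA.BoundedFormula Empty (l + 1)) (u : Empty → M) (v : Fin l → M) :
    ((guardLt t).imp φ).all.Realize u v ↔
      ∀ x, plt x (t.realize (Sum.elim u v)) → φ.Realize u (Fin.snoc v x) := by
  have h_lift (x : M) :
      (liftT t).realize (Sum.elim u (Fin.snoc v x)) = t.realize (Sum.elim u v) := by
    rw [liftT, Term.realize_relabel]
    congr 1
    funext a
    rcases a with a | a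
    · rfl
    · simp
  simp only [BoundedFormula.realize_all, BoundedFormula.realize_imp, guardLt, ltBF]
  refine forall_congr' fun x => imp_congr_left ?_
  refine (BoundedFormula.realize_rel₂ (L := LPA) (R := ArithRel.lt)).trans ?_
  rw [h_lift, Term.realize_var, Sum.elim_inr, Fin.snoc_last]
  rfl

theorem comp_vec_two {α β : Type*} (f : α → β) (a b : α) : f ∘ ![a, b] = ![f a, f b] := by
  rw [← FinVec.map_eq]; rfl

theorem coe_padd {C : LPA.Substructure M} (a b : C) :
    ((padd a b : C) : M) = padd (a : M) (b : M) :=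
  congrArg (Structure.funMap (L := LPA) ArithFunc.add) (comp_vec_two Subtype.val a b)

theorem coe_pmul {C : LPA.Substructure M} (a b : C) :
    ((pmul a b : C) : M) = pmul (a : M) (b : M) :=
  congrArg (Structure.funMap (L := LPA) ArithFunc.mul) (comp_vec_two Subtype.val a b)

theorem coe_pexp {C : LPA.Substructure M} (a b : C) :
    ((pexp a b : C) : M) = pexp (a : M) (b : M) :=
  congrArg (Structure.funMap (L := LPA) ArithFunc.exp) (comp_vec_two Subtype.val a b)

theorem coe_pzero {C : LPA.Substructure M} : ((pzero : C) : M) = pzero :=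
  congrArg (Structure.funMap (L := LPA) ArithFunc.zero) (Subsingleton.elim _ _)

theorem coe_pone {C : LPA.Substructure M} : ((pone : C) : M) = pone :=
  congrArg (Structure.funMap (L := LPA) ArithFunc.one) (Subsingleton.elim _ _)

theorem plt_coe {C : LPA.Substructure M} {a b : C} : plt (a : M) (b : M) ↔ plt a b :=
  iff_of_eq (congrArg (Structure.RelMap (L := LPA) ArithRel.lt) (comp_vec_two Subtype.val a b).symm)

theorem Delta0.of_isAtomic {l : ℕ} {φ : LPA.BoundedFormula Empty l} (hφ : φ.IsAtomic) :
    Delta0 φ := by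
  cases hφ with
  | equal t₁ t₂ => exact .equal t₁ t₂
  | rel R ts =>
    cases R
    rw [← FinVec.etaExpand_eq ts]
    exact .lt (ts 0) (ts 1)

theorem Delta0.realize_substructure {C : LPA.Substructure M}
    (hC : ∀ x, ∀ y ∈ C, plt x y → x ∈ C) {l : ℕ} {φ : LPA.BoundedFormula Empty l}
    (hφ : Delta0 φ) (u : Empty → C) (v : Fin l → C) :
    φ.Realize (Subtype.val ∘ u) (Subtype.val ∘ v) ↔ φ.Realize u v := by
  have h_bdAll {l : ℕ} (t : LPA.Term (Empty ⊕ Fin l)) {φ : LPA.BoundedFormula Empty (l + 1)}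
      (ih : ∀ v : Fin (l + 1) → C,
        φ.Realize (Subtype.val ∘ u) (Subtype.val ∘ v) ↔ φ.Realize u v) (v : Fin l → C) :
      ((guardLt t).imp φ).all.Realize (Subtype.val ∘ u) (Subtype.val ∘ v) ↔
        ((guardLt t).imp φ).all.Realize u v := by
    simp only [realize_guardLt_imp_all, ← Sum.comp_elim, realize_term_substructure]
    rw [Subtype.forall]
    refine forall_congr' fun x => ⟨fun h hxC hx => ?_, fun h hx => ?_⟩
    · rw [← ih, Fin.comp_snoc]
      exact h (plt_coe.2 hx)
    · have hxC : x ∈ C := hC x _ (Subtype.property _) hx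
      have := h hxC (plt_coe.1 hx)
      rwa [← ih, Fin.comp_snoc] at this
  induction hφ with
  | falsum => rfl
  | equal t₁ t₂ => exact (BoundedFormula.IsAtomic.equal t₁ t₂).isQF.realize_embedding C.subtype
  | lt t₁ t₂ => exact (BoundedFormula.IsAtomic.rel _ _).isQF.realize_embedding C.subtype
  | imp _ _ ihφ ihψ => exact imp_congr (ihφ v) (ihψ v)
  | bdAll t _ ih => exact h_bdAll t ih v
  | @bdEx _ t φ _ ih =>
    exact not_congr (h_bdAll t (φ := φ.not) (fun v => not_congr (ih v)) v)

end Absoluteness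

section Ultrapower

/-- The ultrapower `ℕ^ι / U`, presented as germs so as to inherit their ordered semiring
structure; its `LPA`-structure is that of the model-theoretic ultraproduct. -/
abbrev Ultrapower {ι : Type} (U : Ultrafilter ι) : Type :=
  Germ (U : Filter ι) ℕ

noncomputable instance {ι : Type} (U : Ultrafilter ι) : LPA.Structure (Ultrapower U) :=
  inferInstanceAs (LPA.Structure ((U : Filter ι).Product fun _ => ℕ))

namespace Ultrapower

variable {ι : Type} {U : Ultrafilter ι}

theorem funMap_coe {l : ℕ} (F : LPA.Functions l) (x : Fin l → ι → ℕ) :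
    Structure.funMap F (fun k => (x k : Ultrapower U)) =
      ((fun n => Structure.funMap F fun k => x k n : ι → ℕ) : Ultrapower U) :=
  Ultraproduct.funMap_cast F x

theorem realize_coe {l : ℕ} (φ : LPA.BoundedFormula Empty l) (v : Fin l → ι → ℕ) :
    φ.Realize (M := Ultrapower U) (fun e => e.elim) (fun k => (v k : Ultrapower U)) ↔
      ∀ᶠ n in U, φ.Realize (fun e => e.elim) fun k => v k n := by
  rw [Subsingleton.elim (fun e : Empty => e.elim) fun e => ((e.elim : ι → ℕ) : Ultrapower U)]
  refine (Ultraproduct.boundedFormula_realize_cast φ (fun e => e.elim) v).trans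
    (eventually_congr (.of_forall fun n => ?_))
  rw [Subsingleton.elim (fun e : Empty => (e.elim : ι → ℕ) n) fun e => e.elim]

theorem exists_coe_eq {l : ℕ} (x : Fin l → Ultrapower U) :
    ∃ f : Fin l → ι → ℕ, x = fun k => (f k : Ultrapower U) :=
  ⟨fun k => (x k).out, funext fun k => (Quotient.out_eq (x k)).symm⟩

theorem padd_eq_add (x y : Ultrapower U) : padd x y = x + y := by
  refine Germ.inductionOn₂ x y fun f g => ?_
  rw [padd, ← comp_vec_two (fun f : ι → ℕ => (f : Ultrapower U))]
  exact funMap_coe (l := 2) ArithFunc.add _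

theorem pmul_eq_mul (x y : Ultrapower U) : pmul x y = x * y := by
  refine Germ.inductionOn₂ x y fun f g => ?_
  rw [pmul, ← comp_vec_two (fun f : ι → ℕ => (f : Ultrapower U))]
  exact funMap_coe (l := 2) ArithFunc.mul _

theorem pexp_coe (f g : ι → ℕ) :
    pexp (f : Ultrapower U) g = ((fun n => f n ^ g n : ι → ℕ) : Ultrapower U) := by
  rw [pexp, ← comp_vec_two (fun f : ι → ℕ => (f : Ultrapower U))]
  exact funMap_coe (l := 2) ArithFunc.exp _

theorem pzero_eq_zero : (pzero : Ultrapower U) = 0 := by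
  rw [pzero, Subsingleton.elim ![] fun k : Fin 0 => ((k.elim0 : ι → ℕ) : Ultrapower U)]
  exact funMap_coe (l := 0) ArithFunc.zero _

theorem pone_eq_one : (pone : Ultrapower U) = 1 := by
  rw [pone, Subsingleton.elim ![] fun k : Fin 0 => ((k.elim0 : ι → ℕ) : Ultrapower U)]
  exact funMap_coe (l := 0) ArithFunc.one _

theorem plt_iff_lt {x y : Ultrapower U} : plt x y ↔ x < y := by
  refine Germ.inductionOn₂ x y fun f g => ?_
  rw [plt, ← comp_vec_two (fun f : ι → ℕ => (f : Ultrapower U)), Germ.coe_lt]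
  rfl

theorem pexp_zero (x : Ultrapower U) : pexp x 0 = 1 :=
  Germ.inductionOn x fun f => (pexp_coe f 0).trans (congrArg _ (funext fun _ => pow_zero _))

theorem pexp_add_one (x y : Ultrapower U) : pexp x (y + 1) = pexp x y * x :=
  Germ.inductionOn₂ x y fun f g => by
    rw [pexp_coe]
    exact (pexp_coe f (g + 1)).trans (congrArg _ (funext fun _ => pow_succ _ _))

theorem add_one_le_of_lt {x y : Ultrapower U} : x < y → x + 1 ≤ y :=
  Germ.inductionOn₂ x y fun _ _ hfg =>
    Germ.coe_le.2 ((Germ.coe_lt.1 hfg).mono fun _ => Nat.succ_le_of_lt)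

end Ultrapower

end Ultrapower

section Cut

variable {ι : Type} {U : Ultrafilter ι} {h : ι → ℕ → ℕ}

/-- The initial segment of the ultrapower in which the germs of `fun n => h n i` are cofinal. -/
def initialSegment (U : Ultrafilter ι) (h : ι → ℕ → ℕ) : Set (Ultrapower U) :=
  {x | ∃ i, x < ((fun n => h n i : ι → ℕ) : Ultrapower U)}

theorem coe_mem_initialSegment {s : ι → ℕ} :
    (s : Ultrapower U) ∈ initialSegment U h ↔ ∃ i, ∀ᶠ n in U, s n < h n i :=
  exists_congr fun _ => Germ.coe_lt

theorem mem_initialSegment_of_le {x y : Ultrapower U} (hxy : x ≤ y)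
    (hy : y ∈ initialSegment U h) : x ∈ initialSegment U h :=
  hy.imp fun _ => hxy.trans_lt

/-- A scale is a sequence of functions, increasing modulo `U`, whose initial segment of the
ultrapower is closed under `x ↦ x ^ x`, and hence under all operations of `LPA`. -/
structure IsScale (U : Ultrafilter ι) (h : ι → ℕ → ℕ) : Prop where
  strictMono : ∀ᶠ n in U, StrictMono (h n)
  pow_self_le : ∀ i, ∃ j, ∀ᶠ n in U, h n i ^ h n i ≤ h n j

namespace IsScale

variable (hS : IsScale U h)
include hS

theorem eventually_lt_of_le {s : ι → ℕ} {i j : ℕ} (hs : ∀ᶠ n in U, s n < h n i) (hij : i ≤ j) :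
    ∀ᶠ n in U, s n < h n j := by
  filter_upwards [hs, hS.strictMono] with n hsn hn
  exact hsn.trans_le (hn.monotone hij)

theorem coe_mem_of_le_pow_self {r s t : ι → ℕ} (hs : (s : Ultrapower U) ∈ initialSegment U h)
    (ht : (t : Ultrapower U) ∈ initialSegment U h)
    (hr : ∀ n x, s n < x → t n < x → 2 ≤ x → r n ≤ x ^ x) :
    (r : Ultrapower U) ∈ initialSegment U h := by
  rw [coe_mem_initialSegment] at hs ht ⊢
  obtain ⟨i, hi⟩ := hs
  obtain ⟨j, hj⟩ := ht
  obtain ⟨k, hk⟩ := hS.pow_self_le (max i j + 2)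
  refine ⟨k + 1, ?_⟩
  filter_upwards [hS.eventually_lt_of_le hi (show i ≤ max i j + 2 by omega),
    hS.eventually_lt_of_le hj (show j ≤ max i j + 2 by omega), hk, hS.strictMono]
    with n hsn htn h_pow hn
  have h_two : 2 ≤ h n (max i j + 2) := le_trans (by omega) hn.le_apply
  exact ((hr n _ hsn htn h_two).trans h_pow).trans_lt (hn k.lt_add_one)

theorem coe_mem_of_le_sq {r s t : ι → ℕ} (hs : (s : Ultrapower U) ∈ initialSegment U h)
    (ht : (t : Ultrapower U) ∈ initialSegment U h)
    (hr : ∀ n x, s n < x → t n < x → 2 ≤ x → r n ≤ x ^ 2) :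
    (r : Ultrapower U) ∈ initialSegment U h :=
  hS.coe_mem_of_le_pow_self hs ht fun n x hsx htx hx =>
    (hr n x hsx htx hx).trans (Nat.pow_le_pow_right (by omega) hx)

theorem coe_pair_mem {s t : ι → ℕ} (hs : (s : Ultrapower U) ∈ initialSegment U h)
    (ht : (t : Ultrapower U) ∈ initialSegment U h) :
    ((fun n => Nat.pair (s n) (t n) : ι → ℕ) : Ultrapower U) ∈ initialSegment U h :=
  hS.coe_mem_of_le_sq hs ht fun _ _ hsx htx _ =>
    (Nat.pair_lt_max_add_one_sq _ _).le.trans (Nat.pow_le_pow_left (max_lt hsx htx) 2)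

theorem coe_const_mem (m : ℕ) : ((fun _ => m : ι → ℕ) : Ultrapower U) ∈ initialSegment U h :=
  coe_mem_initialSegment.2
    ⟨m + 1, hS.strictMono.mono fun _ hn => m.lt_add_one.trans_le hn.le_apply⟩

theorem funMap_mem {l : ℕ} (F : LPA.Functions l) {x : Fin l → Ultrapower U}
    (hx : ∀ k, x k ∈ initialSegment U h) : Structure.funMap F x ∈ initialSegment U h := by
  obtain ⟨s, rfl⟩ := Ultrapower.exists_coe_eq x
  rw [Ultrapower.funMap_coe]
  cases F with
  | zero => exact hS.coe_const_mem 0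
  | one => exact hS.coe_const_mem 1
  | add =>
    refine hS.coe_mem_of_le_sq (hx 0) (hx 1) fun n x _ _ _ => ?_
    change s 0 n + s 1 n ≤ x ^ 2
    nlinarith
  | mul =>
    refine hS.coe_mem_of_le_sq (hx 0) (hx 1) fun n x _ _ _ => ?_
    change s 0 n * s 1 n ≤ x ^ 2
    nlinarith
  | exp =>
    refine hS.coe_mem_of_le_pow_self (hx 0) (hx 1) fun n _ hsx htx _ => ?_
    exact (Nat.pow_le_pow_left hsx.le _).trans (Nat.pow_le_pow_right (by omega) htx.le)

/-- The cut determined by a scale: its initial segment, as an `LPA`-structure. -/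
def cut : LPA.Substructure (Ultrapower U) where
  carrier := initialSegment U h
  fun_mem F _ hx := hS.funMap_mem F hx

theorem coe_realize_iff_of_delta0 {l : ℕ} {φ : LPA.BoundedFormula Empty l} (hφ : Delta0 φ)
    {v : Fin l → hS.cut} {s : Fin l → ι → ℕ} (hvs : ∀ k, (v k : Ultrapower U) = s k) :
    φ.Realize (fun e => e.elim) v ↔ ∀ᶠ n in U, φ.Realize (fun e => e.elim) fun k => s k n := by
  rw [← hφ.realize_substructure fun x y hy hxy =>
    mem_initialSegment_of_le (Ultrapower.plt_iff_lt.1 hxy).le hy, ← Ultrapower.realize_coe]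
  exact iff_of_eq (congrArg₂ _ (Subsingleton.elim _ _) (funext hvs))

end IsScale

end Cut

section Truth

instance (l : ℕ) : Countable (LPA.Functions l) := by
  let code : ArithFunc l → ℕ := fun F => match F with
    | .zero => 0
    | .one => 1
    | .add => 2
    | .mul => 3
    | .exp => 4
  refine Function.Injective.countable (f := code) fun F G hFG => ?_
  cases F <;> cases G <;> first | rfl | simp [code] at hFG

instance (l : ℕ) : Countable (LPA.Relations l) :=
  have : Subsingleton (ArithRel l) := ⟨fun | .lt, .lt => rfl⟩
  inferInstanceAs (Countable (ArithRel l))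

instance : Countable LPA.Symbols :=
  inferInstanceAs (Countable ((Σ l, LPA.Functions l) ⊕ Σ l, LPA.Relations l))

/-- The tuple of length `l` coded by a number through iterated pairing. -/
def decodeTuple : ∀ l : ℕ, ℕ → Fin l → ℕ
  | 0, _ => Fin.elim0
  | l + 1, a => Fin.snoc (α := fun _ => ℕ) (decodeTuple l a.unpair.1) a.unpair.2

/-- Truth in `ℕ` of the formula in which the successively nested quantifiers are restricted by
`b 0, b 1, …`; the number `a` codes the assignment, and the bounds apply to such codes. -/
def boundedTruth : ∀ {l : ℕ}, LPA.BoundedFormula Empty l → ℕ → (ℕ → ℕ) → Prop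
  | _, .falsum, _, _ => False
  | l, .equal t₁ t₂, a, _ =>
    (BoundedFormula.equal t₁ t₂).Realize (fun e => e.elim) (decodeTuple l a)
  | l, .rel R ts, a, _ => (BoundedFormula.rel R ts).Realize (fun e => e.elim) (decodeTuple l a)
  | _, .imp φ ψ, a, b => boundedTruth φ a b → boundedTruth ψ a b
  | _, .all φ, a, b => ∀ x, Nat.pair a x < b 0 →
      boundedTruth φ (Nat.pair a x) fun q => b (q + 1)

/-- The quantifier depth of a formula, which is the number of bounds that `boundedTruth` uses. -/
def quantDepth : ∀ {l : ℕ}, LPA.BoundedFormula Empty l → ℕ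
  | _, .falsum => 0
  | _, .equal _ _ => 0
  | _, .rel _ _ => 0
  | _, .imp φ ψ => max (quantDepth φ) (quantDepth ψ)
  | _, .all φ => quantDepth φ + 1

theorem dependsOn_boundedTruth {l : ℕ} (φ : LPA.BoundedFormula Empty l) (a : ℕ) :
    DependsOn (boundedTruth φ a) (Set.Iio (quantDepth φ)) := by
  induction φ generalizing a with
  | falsum => exact fun _ _ _ => rfl
  | equal t₁ t₂ => exact fun _ _ _ => rfl
  | rel R ts => exact fun _ _ _ => rfl
  | imp φ ψ ihφ ihψ =>
    intro b b' hb
    simp only [boundedTruth]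
    rw [ihφ a fun q hq => hb q (Set.Iio_subset_Iio (le_max_left _ _) hq),
      ihψ a fun q hq => hb q (Set.Iio_subset_Iio (le_max_right _ _) hq)]
  | all φ ih =>
    intro b b' hb
    simp only [boundedTruth]
    rw [hb 0 (Nat.succ_pos _)]
    refine forall_congr fun x => congrArg (Nat.pair a x < b' 0 → ·) (ih _ fun q hq => ?_)
    exact hb (q + 1) (Nat.succ_lt_succ hq)

variable {ι : Type} {U : Ultrafilter ι} {h : ι → ℕ → ℕ}

/-- Along the index set, the numbers `a n` code representatives of the tuple `v` of elements of
the ultrapower. -/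
def Codes (a : ι → ℕ) {l : ℕ} (v : Fin l → Ultrapower U) : Prop :=
  ∀ k, v k = ((fun n => decodeTuple l (a n) k : ι → ℕ) : Ultrapower U)

theorem Codes.snoc {a : ι → ℕ} {l : ℕ} {v : Fin l → Ultrapower U} (ha : Codes a v) (s : ι → ℕ) :
    Codes (fun n => Nat.pair (a n) (s n)) (Fin.snoc (α := fun _ => Ultrapower U) v s) := by
  intro k
  refine k.lastCases ?_ fun k => ?_
  · simp only [Fin.snoc_last, decodeTuple, Nat.unpair_pair]
  · simpa only [Fin.snoc_castSucc, decodeTuple, Nat.unpair_pair] using ha k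

theorem eventually_forall_imp_iff {α : Type*} [Nonempty α] {p q : ι → α → Prop} :
    (∀ᶠ n in U, ∀ x, p n x → q n x) ↔
      ∀ s : ι → α, (∀ᶠ n in U, p n (s n)) → ∀ᶠ n in U, q n (s n) := by
  refine ⟨fun H s hs => by filter_upwards [H, hs] with n hn hsn using hn _ hsn, fun H => ?_⟩
  by_contra hcon
  rw [← Ultrafilter.eventually_not] at hcon
  push Not at hcon
  obtain ⟨s, hs⟩ := hcon.choice
  obtain ⟨n, hq, hpn⟩ := ((H s (hs.mono fun _ => And.left)).and hs).exists
  exact hpn.2 hq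

theorem eventually_of_internal_induction {p : ι → ℕ → Prop} {w : ι → ℕ}
    (h_zero : ∀ᶠ n in U, p n 0)
    (h_succ : ∀ s : ι → ℕ, (∀ᶠ n in U, s n < w n) → (∀ᶠ n in U, p n (s n)) →
      ∀ᶠ n in U, p n (s n + 1)) :
    ∀ᶠ n in U, p n (w n) := by
  have h_step : ∀ᶠ n in U, ∀ x, x < w n ∧ p n x → p n (x + 1) :=
    eventually_forall_imp_iff.2 fun s hs =>
      h_succ s (hs.mono fun _ => And.left) (hs.mono fun _ => And.right)
  filter_upwards [h_zero, h_step] with n hn_zero hn_step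
  have h_le : ∀ x ≤ w n, p n x := fun x => by
    induction x with
    | zero => exact fun _ => hn_zero
    | succ x ih => exact fun hx => hn_step x ⟨hx, ih (Nat.le_of_lt hx)⟩
  exact h_le _ le_rfl

theorem DiagIndisc.eventually_iff {R : ℕ → (ℕ → ℕ) → Prop} (hR : DiagIndisc U h R) {a : ι → ℕ}
    {i : ℕ} (ha : ∀ᶠ n in U, a n < h n i) {j k : ℕ → ℕ} (hj : StrictMono j) (hk : StrictMono k)
    (hij : i < j 0) (hik : i < k 0) :
    (∀ᶠ n in U, R (a n) (h n ∘ j)) ↔ ∀ᶠ n in U, R (a n) (h n ∘ k) := by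
  refine eventually_congr ?_
  filter_upwards [ha, hR i j k hj hk hij hik] with n han hn using hn _ han

namespace IsScale

variable (hS : IsScale U h)
include hS

theorem exists_codes : ∀ {l : ℕ} (v : Fin l → hS.cut),
    ∃ a : ι → ℕ, (a : Ultrapower U) ∈ initialSegment U h ∧ Codes a (Subtype.val ∘ v)
  | 0, _ => ⟨_, hS.coe_const_mem 0, fun k => k.elim0⟩
  | l + 1, v => by
    obtain ⟨a, ha, hav⟩ := exists_codes (Fin.init v)
    obtain ⟨⟨x, hx⟩, hvx⟩ : ∃ x, v (Fin.last l) = x := ⟨_, rfl⟩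
    obtain ⟨s, rfl⟩ := x.exists_rep
    refine ⟨_, hS.coe_pair_mem ha hx, ?_⟩
    have h_snoc := hav.snoc s
    rwa [← Fin.snoc_init_self v, hvx, Fin.comp_snoc]

theorem realize_cut_iff (h_truth : ∀ {l : ℕ} (φ : LPA.BoundedFormula Empty l),
      DiagIndisc U h (boundedTruth φ))
    {l : ℕ} (φ : LPA.BoundedFormula Empty l) {v : Fin l → hS.cut} {a : ι → ℕ}
    (hav : Codes a (Subtype.val ∘ v)) {i : ℕ} (hai : ∀ᶠ n in U, a n < h n i) {j : ℕ → ℕ}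
    (hj : StrictMono j) (hij : i < j 0) :
    φ.Realize (fun e => e.elim) v ↔ ∀ᶠ n in U, boundedTruth φ (a n) (h n ∘ j) := by
  induction φ generalizing a i j with
  | falsum => exact (eventually_const (f := (U : Filter ι))).symm
  | equal t₁ t₂ => exact hS.coe_realize_iff_of_delta0 (.of_isAtomic (.equal t₁ t₂)) hav
  | rel R ts => exact hS.coe_realize_iff_of_delta0 (.of_isAtomic (.rel R ts)) hav
  | imp φ ψ ihφ ihψ =>
    simp only [boundedTruth, BoundedFormula.realize_imp, Ultrafilter.eventually_imp,
      ihφ hav hai hj hij, ihψ hav hai hj hij]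
  | all φ ih =>
    have h_le : ∀ s : ι → ℕ, ∀ n, s n ≤ Nat.pair (a n) (s n) := fun s n => Nat.right_le_pair _ _
    have h_inst : ∀ (s : ι → ℕ) (hs : (s : Ultrapower U) ∈ hS.cut) (j : ℕ → ℕ), StrictMono j →
        (∀ᶠ n in U, Nat.pair (a n) (s n) < h n (j 0)) →
        (φ.Realize (fun e => e.elim) (Fin.snoc v ⟨s, hs⟩) ↔
          ∀ᶠ n in U, boundedTruth φ (Nat.pair (a n) (s n)) (h n ∘ fun q => j (q + 1))) :=
      fun s hs j hj hsj => ih (by rw [Fin.comp_snoc]; exact hav.snoc s) hsj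
        (hj.comp fun _ _ => Nat.succ_lt_succ) (hj Nat.zero_lt_one)
    simp only [BoundedFormula.realize_all]
    constructor
    · intro H
      refine eventually_forall_imp_iff.2 fun s hs => (h_inst s ?_ j hj hs).1 (H _)
      exact coe_mem_initialSegment.2 ⟨j 0, hs.mono fun n => (h_le s n).trans_lt⟩
    · rintro H ⟨x, hx⟩
      obtain ⟨s, rfl⟩ := x.exists_rep
      obtain ⟨k, hk⟩ := coe_mem_initialSegment.1
        (hS.coe_pair_mem (coe_mem_initialSegment.2 ⟨i, hai⟩) hx)
      -- Indiscernibility moves the bounds beyond the code of the extended tuple.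
      have h_shift : StrictMono fun q => max i k + 1 + q := strictMono_id.const_add _
      have hs := hS.eventually_lt_of_le hk (show k ≤ max i k + 1 + 0 by omega)
      exact (h_inst s hx _ h_shift hs).2 (eventually_forall_imp_iff.1
        (((h_truth φ.all).eventually_iff hai hj h_shift hij (by omega)).1 H) s hs)

theorem induction_cut (h_truth : ∀ {l : ℕ} (φ : LPA.BoundedFormula Empty l),
      DiagIndisc U h (boundedTruth φ))
    {l : ℕ} (φ : LPA.BoundedFormula Empty (l + 1)) (v : Fin l → hS.cut)
    (h_zero : φ.Realize (fun e => e.elim) (Fin.snoc v pzero))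
    (h_succ : ∀ x : hS.cut, φ.Realize (fun e => e.elim) (Fin.snoc v x) →
      φ.Realize (fun e => e.elim) (Fin.snoc v (padd x pone))) (x : hS.cut) :
    φ.Realize (fun e => e.elim) (Fin.snoc v x) := by
  obtain ⟨a, ha, hav⟩ := hS.exists_codes v
  obtain ⟨x, hx⟩ := x
  obtain ⟨w, rfl⟩ := x.exists_rep
  obtain ⟨i, hi⟩ := coe_mem_initialSegment.1 (hS.coe_pair_mem ha hx)
  have h_mem : ∀ s : ι → ℕ, (∀ᶠ n in U, s n ≤ w n) → (s : Ultrapower U) ∈ hS.cut :=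
    fun s hs => mem_initialSegment_of_le (Germ.coe_le.2 hs) hx
  have h_inst : ∀ (s : ι → ℕ) (hs : ∀ᶠ n in U, s n ≤ w n),
      φ.Realize (fun e => e.elim) (Fin.snoc v ⟨s, h_mem s hs⟩) ↔
        ∀ᶠ n in U, boundedTruth φ (Nat.pair (a n) (s n)) (h n ∘ fun q => i + 1 + q) :=
    fun s hs => by
      refine hS.realize_cut_iff h_truth φ (by rw [Fin.comp_snoc]; exact hav.snoc s) (i := i) ?_
        (strictMono_id.const_add _) (by omega)
      filter_upwards [hi, hs] with n hin hsn
      have h_pair : StrictMono (Nat.pair (a n)) := fun _ _ => Nat.pair_lt_pair_right _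
      exact (h_pair.monotone hsn).trans_lt hin
  refine (h_inst w (.of_forall fun _ => le_rfl)).2 (eventually_of_internal_induction
    (p := fun n y => boundedTruth φ (Nat.pair (a n) y) (h n ∘ fun q => i + 1 + q)) ?_ ?_)
  · refine (h_inst (fun _ => 0) (.of_forall fun _ => Nat.zero_le _)).1 ?_
    convert h_zero
    exact (coe_pzero.trans Ultrapower.pzero_eq_zero).symm
  · intro s hsw hs
    refine (h_inst (fun n => s n + 1) hsw).1 ?_
    convert h_succ _ ((h_inst s (hsw.mono fun _ => le_of_lt)).2 hs)
    rw [coe_padd, coe_pone, Ultrapower.padd_eq_add, Ultrapower.pone_eq_one]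
    rfl

theorem isPAModel_cut (h_truth : ∀ {l : ℕ} (φ : LPA.BoundedFormula Empty l),
    DiagIndisc U h (boundedTruth φ)) : IsPAModel hS.cut := by
  refine ⟨?_, ?_, ?_, ?_, ?_, ?_, ?_, ?_, ?_, ?_, ?_, ?_, ?_, ?_, ?_, ?_, ?_,
    fun _ => hS.induction_cut h_truth⟩ <;>
    simp only [Subtype.ext_iff, Subtype.forall, coe_padd, coe_pmul, coe_pexp, coe_pzero, coe_pone,
      ← plt_coe, Ultrapower.padd_eq_add, Ultrapower.pmul_eq_mul, Ultrapower.pzero_eq_zero,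
      Ultrapower.pone_eq_one, Ultrapower.plt_iff_lt]
  · exact fun x _ => add_zero x
  · exact fun x _ y _ => add_comm x y
  · exact fun x _ y _ z _ => add_assoc x y z
  · exact fun x _ => mul_zero x
  · exact fun x _ => mul_one x
  · exact fun x _ y _ => mul_comm x y
  · exact fun x _ y _ z _ => mul_assoc x y z
  · exact fun x _ y _ z _ => mul_add x y z
  · exact fun x _ => lt_irrefl x
  · exact fun x _ y _ z _ => lt_trans
  · exact fun x _ y _ => lt_trichotomy x y
  · exact fun x _ y _ z _ hxy => add_lt_add_left hxy z
  · exact fun x _ => eq_zero_or_pos x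
  · exact fun x _ => lt_add_one x
  · exact fun x _ y _ hxy => (Ultrapower.add_one_le_of_lt hxy).eq_or_lt
  · exact fun x _ => Ultrapower.pexp_zero x
  · exact fun x _ y _ => Ultrapower.pexp_add_one x y

end IsScale

end Truth

section Domination

theorem DiagIndisc.isScale {ι : Type} {U : Ultrafilter ι} {h : ι → ℕ → ℕ}
    (h_mono : ∀ᶠ n in U, StrictMono (h n)) (h_sub : DiagIndisc U h fun a b => b 1 - b 0 = a)
    (h_div : DiagIndisc U h fun a b => b 1 / b 0 = a)
    (h_log : DiagIndisc U h fun a b => Nat.log (b 0) (b 1) = a) : IsScale U h where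
  strictMono := h_mono
  pow_self_le i := ⟨i + 2, by
    filter_upwards [h_mono, h_sub.pow_le h_mono h_div h_log i.lt_add_one (i + 1).lt_add_one]
      with n hn h_pow
    exact (Nat.pow_le_pow_left (hn i.lt_add_one).le _).trans h_pow⟩

theorem tendsto_atTop_of_dfun_le {f c : ℕ → ℕ} (hc : ∀ n, Dfun n n (n + c n) ≤ f (c n)) :
    Tendsto c atTop atTop := by
  rw [← Nat.cofinite_eq_atTop, Tendsto, le_cofinite_iff_eventually_ne]
  refine fun x => eventually_map.2 ?_
  rw [Nat.cofinite_eq_atTop]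
  filter_upwards [eventually_gt_atTop (f x)] with n hn
  rintro rfl
  have h_le := (dfun_spec n n (n + c n)).1
  have := hc n
  omega

theorem exists_isScale_of_dfun_le {f c : ℕ → ℕ} (hc : ∀ n, Dfun n n (n + c n) ≤ f (c n)) :
    ∃ (h : ℕ → ℕ → ℕ) (hS : IsScale (hyperfilter ℕ) h),
      (∀ {l : ℕ} (φ : LPA.BoundedFormula Empty l),
        DiagIndisc (hyperfilter ℕ : Filter ℕ) h (boundedTruth φ)) ∧
      (c : Ultrapower (hyperfilter ℕ)) ∈ hS.cut ∧
      ∀ i, ∀ᶠ n in hyperfilter ℕ, h n i < f (c n) := by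
  let F : Fin 3 → ℕ → ℕ → ℕ := ![fun x y => y - x, fun x y => y / x, Nat.log]
  let R : Fin 3 ⊕ (Σ l, LPA.BoundedFormula Empty l) → ℕ → (ℕ → ℕ) → Prop :=
    Sum.elim (fun e a b => F e (b 0) (b 1) = a) fun φ => boundedTruth φ.2
  have hR : ∀ e a, DependsOn (R e a) (Set.Iio (Sum.elim (fun _ => 2) (fun φ => quantDepth φ.2) e))
    | .inl e, a, b, b', hb => by
      simp only [R, Sum.elim_inl, hb 0 (by simp), hb 1 (by simp)]
    | .inr φ, a, b, b', hb => dependsOn_boundedTruth φ.2 a hb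
  obtain ⟨h, h_mono, h_indisc, h_lt, h_le⟩ := exists_diagIndisc hR (tendsto_atTop_of_dfun_le hc)
    fun n => (dfun_spec n n (n + c n)).2
  have hU : ((hyperfilter ℕ : Ultrafilter ℕ) : Filter ℕ) ≤ atTop := Nat.hyperfilter_le_atTop
  replace h_mono := h_mono.filter_mono hU
  replace h_indisc := fun e => (h_indisc e).filter_mono hU
  have h_sub : DiagIndisc (hyperfilter ℕ : Filter ℕ) h fun a b => b 1 - b 0 = a := h_indisc (.inl 0)
  have hS : IsScale (hyperfilter ℕ) h :=
    h_sub.isScale h_mono (h_indisc (.inl 1)) (h_indisc (.inl 2))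
  refine ⟨h, hS, fun φ => h_indisc (.inr ⟨_, φ⟩), coe_mem_initialSegment.2 ⟨3, ?_⟩, fun i => ?_⟩
  · filter_upwards [h_mono, h_le.filter_mono hU, h_sub.add_le h_mono zero_lt_one one_lt_two]
      with n hn hcn h_add
    have := hn (zero_lt_one (α := ℕ))
    have := hn (show 2 < 3 by norm_num)
    omega
  · exact ((h_lt i).mono fun n hn => hn.trans_le (hc n)).filter_mono hU

theorem exists_forall_lt_dfun (f : ℕ → ℕ) (θ : LPA.BoundedFormula Empty 3) (hθ : Delta0 θ)
    (hgraph : ∀ x y : ℕ, f x = y ↔ ∃ z : ℕ, θ.Realize (fun e => e.elim) ![x, y, z])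
    (hprov : PAproves θ.ex.ex.all) :
    ∃ n₀ : ℕ, ∀ x : ℕ, f x < Dfun n₀ n₀ (n₀ + x) := by
  by_contra! hcon
  choose c hc using hcon
  obtain ⟨h, hS, h_truth, h_mem, h_lt⟩ := exists_isScale_of_dfun_le hc
  have h_total := hprov hS.cut inferInstance (hS.isPAModel_cut h_truth)
  simp only [Sentence.Realize, Formula.Realize, BoundedFormula.realize_all,
    BoundedFormula.realize_ex] at h_total
  obtain ⟨⟨y, hy⟩, ⟨z, hz⟩, hyz⟩ := h_total ⟨c, h_mem⟩
  obtain ⟨s, rfl⟩ := y.exists_rep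
  obtain ⟨t, rfl⟩ := z.exists_rep
  obtain ⟨i, hi⟩ := coe_mem_initialSegment.1 hy
  have h_real : ∀ᶠ n in hyperfilter ℕ, θ.Realize (fun e => e.elim) ![c n, s n, t n] := by
    rw [Subsingleton.elim default fun e => e.elim] at hyz
    refine ((hS.coe_realize_iff_of_delta0 hθ (s := ![c, s, t]) fun k => ?_).1 hyz).mono
      fun n hn => ?_
    · fin_cases k <;> rfl
    · convert hn using 2 with k
      fin_cases k <;> rfl
  obtain ⟨n, hn, hsn, hfn⟩ := (h_real.and (hi.and (h_lt i))).exists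
  exact (hfn.trans_eq ((hgraph _ _).2 ⟨_, hn⟩)).not_gt hsn

end Domination

/-- the diagonal Ramsey function dominates every provably total
computable function of PA: if `f` has a `Σ₁`-definable graph `∃z θ(x,y,z)`
(`θ ∈ Δ₀`) whose totality `∀x∃y∃z θ` is provable in PA, then
`f(x) < D(n₀, n₀, n₀ + x)` for some `n₀` and all `x`; hence `n ↦ D(n,n,2n)`
eventually dominates `f`. -/
theorem diagonal_ramsey_dominates (f : ℕ → ℕ)
    (θ : LPA.BoundedFormula Empty 3) (hθ : Delta0 θ)
    (hgraph : ∀ x y : ℕ, f x = y ↔ ∃ z : ℕ, θ.Realize (fun e => e.elim) ![x, y, z])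
    (hprov : PAproves θ.ex.ex.all) :
    ∃ n₀ : ℕ, (∀ x : ℕ, f x < Dfun n₀ n₀ (n₀ + x)) ∧
      ∃ N : ℕ, ∀ n : ℕ, N ≤ n → f n < Dfun n n (2 * n) := by
  obtain ⟨n₀, h_lt⟩ := exists_forall_lt_dfun f θ hθ hgraph hprov
  refine ⟨n₀, h_lt, n₀, fun n hn => ?_⟩
  obtain ⟨d, rfl⟩ := Nat.exists_eq_add_of_le hn
  calc f (n₀ + d) < Dfun n₀ n₀ (n₀ + (n₀ + d)) := h_lt (n₀ + d)
    _ ≤ Dfun (n₀ + d) (n₀ + d) (n₀ + (n₀ + d) + d) := dfun_le_dfun_add hn d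
    _ = Dfun (n₀ + d) (n₀ + d) (2 * (n₀ + d)) := by congr 1; ring
end
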